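/- arXiv:1502.02651 — 5 statements merged into one kernel-verified Lean document; each statement's English description precedes it below -/
import Mathlib

section
/- Let γ ∈ (0,1), N, T ≥ 1, and S̃ ≥ 0. Let Φ_0, Φ_1, …, Φ_N : ℤ → ℝ be functions such that each Φ_i is nonincreasing, Φ_N(s) ≥ 1 for all s ≤ 0, Φ_N(s) ≥ 0 for all s, and Φ_{i-1}(s) ≥ (1/2 - γ/2)·Φ_i(s-1) + (1/2 + γ/2)·Φ_i(s+1) for all 1 ≤ i ≤ N and s ∈ ℤ. Let z_t^i ∈ {-1,1} for 1 ≤ i ≤ N and 1 ≤ t ≤ T, and define s_t^0 = 0, s_t^i = s_t^{i-1} + z_t^i, and w_t^i = (1/2)·(Φ_i(s_t^{i-1} - 1) - Φ_i(s_t^{i-1} + 1)) (which is nonnegative since Φ_i is nonincreasing). Suppose that for every 1 ≤ i ≤ N the weak-learning inequality Σ_{t=1}^T w_t^i z_t^i ≥ γ·Σ_{t=1}^T w_t^i - S̃·max_{1≤t≤T} w_t^i holds. Then the number of indices t ∈ {1,…,T} with s_t^N ≤ 0 is at most Φ_0(0)·T + S̃·Σ_{i=1}^N max_{1≤t≤T}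 w_t^i. -/
/-!
Track the total potential `∑ t, Φ i (s t i)`. Since `z = ±1`, a vote turns `φ x` into
`φ (x + z) = (φ (x - 1) + φ (x + 1)) / 2 - w * z` with `w` half the drop of `φ` across `x`, and the
recursion says that the mean on the right is at most the previous potential plus `γ * w`. Summed
over the examples, the surplus `γ * ∑ w - ∑ w * z` is what weak learning controls, so each learner
raises the total potential by at most its excess loss. At the end every mistake carries potential
at least `1`.
-/

/-- The weight `w` that the booster gives to an example with current vote `x` when the potential
after the next vote is `φ`: half the difference between the values of `φ` after a wrong and after
a correct vote. -/
noncomputable def potentialWeight (φ : ℤ → ℝ) (x : ℤ) : ℝ :=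
  1 / 2 * (φ (x - 1) - φ (x + 1))

theorem apply_add_eq_mean_sub_potentialWeight_mul (φ : ℤ → ℝ) (x : ℤ) {z : ℤ}
    (hz : z = 1 ∨ z = -1) :
    φ (x + z) = (φ (x - 1) + φ (x + 1)) / 2 - potentialWeight φ x * z := by
  unfold potentialWeight
  rcases hz with rfl | rfl
  · push_cast
    ring
  · rw [← sub_eq_add_neg]
    push_cast
    ring

theorem biased_mean_eq_mean_sub_mul_potentialWeight (γ : ℝ) (φ : ℤ → ℝ) (x : ℤ) :
    (1 / 2 - γ / 2) * φ (x - 1) + (1 / 2 + γ / 2) * φ (x + 1)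
      = (φ (x - 1) + φ (x + 1)) / 2 - γ * potentialWeight φ x := by
  unfold potentialWeight
  ring

theorem apply_add_le_of_biased_mean_le {γ b : ℝ} {φ : ℤ → ℝ} {x z : ℤ}
    (hb : (1 / 2 - γ / 2) * φ (x - 1) + (1 / 2 + γ / 2) * φ (x + 1) ≤ b)
    (hz : z = 1 ∨ z = -1) :
    φ (x + z) ≤ b + γ * potentialWeight φ x - potentialWeight φ x * z := by
  rw [biased_mean_eq_mean_sub_mul_potentialWeight] at hb
  rw [apply_add_eq_mean_sub_potentialWeight_mul φ x hz]
  linarith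

section

variable {ι : Type*} {A : Finset ι}

theorem card_filter_le_sum_of_one_le {p : ι → Prop} [DecidablePred p] {f : ι → ℝ}
    (hp : ∀ t ∈ A, p t → 1 ≤ f t) (hf : ∀ t ∈ A, 0 ≤ f t) :
    ((A.filter p).card : ℝ) ≤ ∑ t ∈ A, f t := by
  rw [Finset.natCast_card_filter]
  refine Finset.sum_le_sum fun t ht => ?_
  split_ifs with h
  exacts [hp t ht h, hf t ht]

theorem sum_apply_add_le_sum_add_excess {γ ε : ℝ} {φ ψ : ℤ → ℝ} {x z : ι → ℤ} {w : ι → ℝ}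
    (hrec : ∀ y, (1 / 2 - γ / 2) * φ (y - 1) + (1 / 2 + γ / 2) * φ (y + 1) ≤ ψ y)
    (hz : ∀ t ∈ A, z t = 1 ∨ z t = -1)
    (hw : ∀ t ∈ A, w t = potentialWeight φ (x t))
    (hwl : γ * ∑ t ∈ A, w t - ε ≤ ∑ t ∈ A, w t * z t) :
    ∑ t ∈ A, φ (x t + z t) ≤ ∑ t ∈ A, ψ (x t) + ε := by
  calc
    ∑ t ∈ A, φ (x t + z t) ≤ ∑ t ∈ A, (ψ (x t) + γ * w t - w t * z t) :=
      Finset.sum_le_sum fun t ht => by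
        rw [hw t ht]
        exact apply_add_le_of_biased_mean_le (hrec (x t)) (hz t ht)
    _ = ∑ t ∈ A, ψ (x t) + (γ * ∑ t ∈ A, w t - ∑ t ∈ A, w t * z t) := by
      rw [Finset.sum_sub_distrib, Finset.sum_add_distrib, ← Finset.mul_sum, add_sub_assoc]
    _ ≤ ∑ t ∈ A, ψ (x t) + ε := by linarith

variable {N : ℕ} {γ ε : ℕ → ℝ} {Φ : ℕ → ℤ → ℝ} {z : ℕ → ι → ℤ} {s : ι → ℕ → ℤ} {w : ℕ → ι → ℝ}

theorem sum_potential_le_sum_initial_add_sum_excess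
    (hrec : ∀ i < N, ∀ x : ℤ,
      (1 / 2 - γ i / 2) * Φ (i + 1) (x - 1) + (1 / 2 + γ i / 2) * Φ (i + 1) (x + 1) ≤ Φ i x)
    (hz : ∀ j < N, ∀ t ∈ A, z j t = 1 ∨ z j t = -1)
    (hsrec : ∀ j < N, ∀ t ∈ A, s t (j + 1) = s t j + z j t)
    (hw : ∀ j < N, ∀ t ∈ A, w j t = potentialWeight (Φ (j + 1)) (s t j))
    (hwl : ∀ j < N, γ j * ∑ t ∈ A, w j t - ε j ≤ ∑ t ∈ A, w j t * z j t) :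
    ∑ t ∈ A, Φ N (s t N) ≤ ∑ t ∈ A, Φ 0 (s t 0) + ∑ j ∈ Finset.range N, ε j := by
  have step : ∀ j < N, ∑ t ∈ A, Φ (j + 1) (s t (j + 1)) - ∑ t ∈ A, Φ j (s t j) ≤ ε j := by
    intro j hj
    rw [Finset.sum_congr rfl fun t ht => by rw [hsrec j hj t ht], sub_le_iff_le_add']
    exact sum_apply_add_le_sum_add_excess (hrec j hj) (hz j hj) (hw j hj) (hwl j hj)
  rw [← sub_le_iff_le_add', ← Finset.sum_range_sub (fun j => ∑ t ∈ A, Φ j (s t j))]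
  exact Finset.sum_le_sum fun j hj => step j (Finset.mem_range.mp hj)

theorem stmt_2_general
    (hfin1 : ∀ x : ℤ, x ≤ 0 → 1 ≤ Φ N x)
    (hfin0 : ∀ x : ℤ, 0 ≤ Φ N x)
    (hrec : ∀ i < N, ∀ x : ℤ,
      (1 / 2 - γ i / 2) * Φ (i + 1) (x - 1) + (1 / 2 + γ i / 2) * Φ (i + 1) (x + 1) ≤ Φ i x)
    (hz : ∀ j < N, ∀ t ∈ A, z j t = 1 ∨ z j t = -1)
    (hs0 : ∀ t ∈ A, s t 0 = 0)
    (hsrec : ∀ j < N, ∀ t ∈ A, s t (j + 1) = s t j + z j t)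
    (hw : ∀ j < N, ∀ t ∈ A, w j t = potentialWeight (Φ (j + 1)) (s t j))
    (hwl : ∀ j < N, γ j * ∑ t ∈ A, w j t - ε j ≤ ∑ t ∈ A, w j t * z j t) :
    ((A.filter (fun t => s t N ≤ 0)).card : ℝ)
      ≤ Φ 0 0 * A.card + ∑ j ∈ Finset.range N, ε j := by
  calc
    ((A.filter (fun t => s t N ≤ 0)).card : ℝ) ≤ ∑ t ∈ A, Φ N (s t N) :=
      card_filter_le_sum_of_one_le (fun t _ => hfin1 (s t N)) (fun t _ => hfin0 (s t N))
    _ ≤ ∑ t ∈ A, Φ 0 (s t 0) + ∑ j ∈ Finset.range N, ε j :=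
      sum_potential_le_sum_initial_add_sum_excess hrec hz hsrec hw hwl
    _ = Φ 0 0 * A.card + ∑ j ∈ Finset.range N, ε j := by
      rw [Finset.sum_congr rfl fun t ht => by rw [hs0 t ht], Finset.sum_const, nsmul_eq_mul,
        mul_comm]

end

/-- Deterministic core of the mistake bound for the potential-based family of
online boosting algorithms. Weak learners are indexed by `j = 0, …, N-1`
(corresponding to the paper's `i = j+1`), examples by `t = 0, …, T-1`.
`s t j` is the cumulative vote after `j` weak learners on example `t`,
`z j t ∈ {-1,1}` is the `(j+1)`-st weak learner's prediction times the label,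
and `w j t = (1/2)(Φ_{j+1}(s_t^j - 1) - Φ_{j+1}(s_t^j + 1))`.
If each potential `Φ i` is nonincreasing, `Φ N ≥ 1` on nonpositive inputs and
`Φ N ≥ 0` everywhere, the potentials satisfy the recursion inequality, and each
weak learner satisfies the weighted weak-learning inequality with edge `γ` and
excess loss `Stilde`, then the number of examples with `s_t^N ≤ 0` is at most
`Φ_0(0) T + Stilde Σ_j max_t w j t`. -/
theorem stmt_2 (γ : ℝ) (hγ : 0 < γ ∧ γ < 1) (N T : ℕ) (hN : 1 ≤ N) (hT : 1 ≤ T)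
    (Stilde : ℝ) (hS : 0 ≤ Stilde)
    (Φ : ℕ → ℤ → ℝ)
    (hmono : ∀ i ≤ N, Antitone (Φ i))
    (hfin1 : ∀ s : ℤ, s ≤ 0 → 1 ≤ Φ N s)
    (hfin0 : ∀ s : ℤ, 0 ≤ Φ N s)
    (hrec : ∀ i < N, ∀ s : ℤ,
      Φ i s ≥ (1 / 2 - γ / 2) * Φ (i + 1) (s - 1) + (1 / 2 + γ / 2) * Φ (i + 1) (s + 1))
    (z : ℕ → ℕ → ℤ) (hz : ∀ j < N, ∀ t < T, z j t = 1 ∨ z j t = -1)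
    (s : ℕ → ℕ → ℤ) (hs0 : ∀ t < T, s t 0 = 0)
    (hsrec : ∀ j < N, ∀ t < T, s t (j + 1) = s t j + z j t)
    (w : ℕ → ℕ → ℝ)
    (hw : ∀ j < N, ∀ t < T,
      w j t = 1 / 2 * (Φ (j + 1) (s t j - 1) - Φ (j + 1) (s t j + 1)))
    (hwl : ∀ j < N,
      ∑ t ∈ Finset.range T, w j t * (z j t : ℝ)
        ≥ γ * ∑ t ∈ Finset.range T, w j t
          - Stilde * (Finset.range T).sup' (Finset.nonempty_range_iff.mpr (by omega))
              (fun t => w j t)) :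
    (((Finset.range T).filter (fun t => s t N ≤ 0)).card : ℝ)
      ≤ Φ 0 0 * T
        + Stilde * ∑ j ∈ Finset.range N,
            (Finset.range T).sup' (Finset.nonempty_range_iff.mpr (by omega))
              (fun t => w j t) := by
  simp only [← Finset.mem_range (n := T)] at hz hs0 hsrec hw
  simpa only [Finset.card_range, Finset.mul_sum] using
    stmt_2_general (γ := fun _ => γ) hfin1 hfin0 hrec hz hs0 hsrec hw hwl
end

section
/- For every σ ∈ [0,1] there exists α ∈ [-2,2] such that σ·e^{-α} + (1-σ)·e^{α} ≤ 1 - (1/2)·(2σ - 1)². -/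
/-!
The choice `α = 2σ - 1` turns the left-hand side into `cosh α - α sinh α`. Multiplying the two
instances `1 + α ≤ exp α` and `1 - α ≤ exp (-α)` of the tangent line bound gives
`0 ≤ (exp α - 1 - α) (exp (-α) - 1 + α)`, which expands to twice `1 - α² / 2 - (cosh α - α sinh α)`.
-/

theorem weighted_exp_eq_cosh_sub_sinh (σ α : ℝ) :
    σ * Real.exp (-α) + (1 - σ) * Real.exp α = Real.cosh α - (2 * σ - 1) * Real.sinh α := by
  rw [Real.cosh_eq, Real.sinh_eq]
  ring

theorem cosh_sub_mul_sinh_le_one_sub_sq_div_two (x : ℝ) :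
    Real.cosh x - x * Real.sinh x ≤ 1 - x ^ 2 / 2 := by
  have tangent_pos : 0 ≤ Real.exp x - 1 - x := by linarith [Real.add_one_le_exp x]
  have tangent_neg : 0 ≤ Real.exp (-x) - 1 + x := by linarith [Real.add_one_le_exp (-x)]
  have exp_mul_exp_neg : Real.exp x * Real.exp (-x) = 1 := by
    rw [← Real.exp_add, add_neg_cancel, Real.exp_zero]
  have product_eq : (Real.exp x - 1 - x) * (Real.exp (-x) - 1 + x) =
      2 * (1 - x ^ 2 / 2 - (Real.cosh x - x * Real.sinh x)) := by
    rw [Real.cosh_eq, Real.sinh_eq]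
    linear_combination exp_mul_exp_neg
  linarith [mul_nonneg tangent_pos tangent_neg]

theorem stmt_8_general (σ : ℝ) :
    σ * Real.exp (-(2 * σ - 1)) + (1 - σ) * Real.exp (2 * σ - 1) ≤
      1 - 1 / 2 * (2 * σ - 1) ^ 2 := by
  rw [weighted_exp_eq_cosh_sub_sinh]
  linarith [cosh_sub_mul_sinh_le_one_sub_sq_div_two (2 * σ - 1)]

/-- For every `σ ∈ [0,1]` there exists `α ∈ [-2,2]` with
`σ e^{-α} + (1-σ) e^{α} ≤ 1 - (1/2)(2σ - 1)²`. -/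
theorem stmt_8 (σ : ℝ) (hσ : 0 ≤ σ ∧ σ ≤ 1) :
    ∃ α : ℝ, -2 ≤ α ∧ α ≤ 2 ∧
      σ * Real.exp (-α) + (1 - σ) * Real.exp α ≤ 1 - 1 / 2 * (2 * σ - 1) ^ 2 :=
  ⟨2 * σ - 1, by linarith [hσ.1], by linarith [hσ.2], stmt_8_general σ⟩
end

section
/- Let T ≥ 1, let s_1,…,s_T ∈ ℝ and z_1,…,z_T ∈ {-1,1}. Define w_t = 1/(1 + e^{s_t}), W = Σ_{t=1}^T w_t, and γ = (Σ_{t=1}^T w_t z_t)/(2W). Then there exists α ∈ [-2,2] such that Σ_{t=1}^T [ln(1 + e^{-(s_t + α z_t)}) - ln(1 + e^{-s_t})] ≤ -2γ²·W. -/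
/-!
Since `log` lies below its tangents, the change of the logistic loss at `s` under a step `a` is at
most `w * (exp (-a) - 1)`, with `w = 1 / (1 + exp s)` the boosting weight. By convexity of `exp`,
`exp (-(α * z)) ≤ cosh α - z * sinh α` for `|z| ≤ 1`, so if `α` is the weighted mean of the `z t`
(that is, `α = 2 * γ`), the total change is at most `W * (cosh α - 1 - α * sinh α)`. The inequality
`cosh α - 1 + α ^ 2 / 2 ≤ α * sinh α` finishes the proof.
-/

open Real

lemma cosh_sub_one_add_sq_half_le_mul_sinh (x : ℝ) :
    cosh x - 1 + x ^ 2 / 2 ≤ x * sinh x := by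
  have left_nonneg : 0 ≤ x - 1 + exp (-x) := by linarith [add_one_le_exp (-x)]
  have right_nonneg : 0 ≤ exp x - 1 - x := by linarith [add_one_le_exp x]
  have exp_mul_exp_neg : exp x * exp (-x) = 1 := by rw [← exp_add, add_neg_cancel, exp_zero]
  have product_eq : (x - 1 + exp (-x)) * (exp x - 1 - x)
      = 2 * (x * sinh x - (cosh x - 1 + x ^ 2 / 2)) := by
    rw [sinh_eq, cosh_eq]
    linear_combination exp_mul_exp_neg
  linarith [mul_nonneg left_nonneg right_nonneg]

lemma log_one_add_exp_neg_add_sub_le (s a : ℝ) :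
    log (1 + exp (-(s + a))) - log (1 + exp (-s)) ≤ 1 / (1 + exp s) * (exp (-a) - 1) := by
  calc log (1 + exp (-(s + a))) - log (1 + exp (-s))
      = log ((1 + exp (-(s + a))) / (1 + exp (-s))) :=
        (log_div (by positivity) (by positivity)).symm
    _ ≤ (1 + exp (-(s + a))) / (1 + exp (-s)) - 1 := log_le_sub_one_of_pos (by positivity)
    _ = 1 / (1 + exp s) * (exp (-a) - 1) := by
        rw [neg_add, exp_add, exp_neg s]
        field_simp
        ring

section WeightedSum

variable {ι : Type*} {t : Finset ι} {w z : ι → ℝ}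

lemma abs_sum_mul_le_sum (hw : ∀ i ∈ t, 0 ≤ w i) (hz : ∀ i ∈ t, |z i| ≤ 1) :
    |∑ i ∈ t, w i * z i| ≤ ∑ i ∈ t, w i := by
  refine (t.abs_sum_le_sum_abs _).trans (Finset.sum_le_sum fun i hi => ?_)
  rw [abs_mul, abs_of_nonneg (hw i hi)]
  exact mul_le_of_le_one_right (hw i hi) (hz i hi)

lemma sum_mul_exp_neg_sub_one_le (hw : ∀ i ∈ t, 0 ≤ w i) (hz : ∀ i ∈ t, |z i| ≤ 1) (α : ℝ) :
    ∑ i ∈ t, w i * (exp (-(α * z i)) - 1)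
      ≤ (∑ i ∈ t, w i) * (cosh α - 1) - (∑ i ∈ t, w i * z i) * sinh α := by
  rw [Finset.sum_mul, Finset.sum_mul, ← Finset.sum_sub_distrib]
  refine Finset.sum_le_sum fun i hi => ?_
  have exp_le_chord : exp (-(α * z i)) ≤ cosh α - z i * sinh α := by
    simpa only [mul_neg, mul_comm (z i) α, cosh_neg, sinh_neg, ← sub_eq_add_neg]
      using exp_mul_le_cosh_add_mul_sinh (hz i hi) (-α)
  calc w i * (exp (-(α * z i)) - 1)
      ≤ w i * (cosh α - z i * sinh α - 1) := by gcongr; exact hw i hi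
    _ = w i * (cosh α - 1) - w i * z i * sinh α := by ring

lemma sum_mul_exp_neg_sub_one_le_of_sum_mul_eq (hw : ∀ i ∈ t, 0 ≤ w i)
    (hz : ∀ i ∈ t, |z i| ≤ 1) {α : ℝ} (hα : ∑ i ∈ t, w i * z i = α * ∑ i ∈ t, w i) :
    ∑ i ∈ t, w i * (exp (-(α * z i)) - 1) ≤ -(α ^ 2 / 2) * ∑ i ∈ t, w i := by
  calc ∑ i ∈ t, w i * (exp (-(α * z i)) - 1)
      ≤ (∑ i ∈ t, w i) * (cosh α - 1) - (∑ i ∈ t, w i * z i) * sinh α :=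
        sum_mul_exp_neg_sub_one_le hw hz α
    _ = (cosh α - 1 - α * sinh α) * ∑ i ∈ t, w i := by rw [hα]; ring
    _ ≤ -(α ^ 2 / 2) * ∑ i ∈ t, w i :=
        mul_le_mul_of_nonneg_right (by linarith [cosh_sub_one_add_sq_half_le_mul_sinh α])
          (Finset.sum_nonneg hw)

end WeightedSum

theorem stmt_12_general {ι : Type*} [Fintype ι] [Nonempty ι] (s z : ι → ℝ)
    (hz : ∀ t, |z t| ≤ 1)
    (w : ι → ℝ) (hw : ∀ t, w t = 1 / (1 + exp (s t)))
    (W : ℝ) (hW : W = ∑ t, w t)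
    (γ : ℝ) (hγ : γ = (∑ t, w t * z t) / (2 * W)) :
    |2 * γ| ≤ 1 ∧
      ∑ t, (log (1 + exp (-(s t + 2 * γ * z t))) - log (1 + exp (-(s t))))
        ≤ -2 * γ ^ 2 * W := by
  have w_pos (t : ι) : 0 < w t := by rw [hw t]; positivity
  have W_pos : 0 < W := hW ▸ Finset.sum_pos (fun t _ => w_pos t) Finset.univ_nonempty
  have edge_eq : ∑ t, w t * z t = 2 * γ * W := by rw [hγ]; field_simp
  constructor
  · have abs_edge_le : |2 * γ * W| ≤ W := by
      rw [← edge_eq, hW]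
      exact abs_sum_mul_le_sum (fun t _ => (w_pos t).le) fun t _ => hz t
    rw [abs_mul, abs_of_pos W_pos] at abs_edge_le
    exact (mul_le_iff_le_one_left W_pos).1 abs_edge_le
  · calc ∑ t, (log (1 + exp (-(s t + 2 * γ * z t))) - log (1 + exp (-(s t))))
        ≤ ∑ t, w t * (exp (-(2 * γ * z t)) - 1) :=
          Finset.sum_le_sum fun t _ => hw t ▸ log_one_add_exp_neg_add_sub_le (s t) (2 * γ * z t)
      _ ≤ -((2 * γ) ^ 2 / 2) * ∑ t, w t :=
          sum_mul_exp_neg_sub_one_le_of_sum_mul_eq (fun t _ => (w_pos t).le) (fun t _ => hz t)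
            (hW ▸ edge_eq)
      _ = -2 * γ ^ 2 * W := by rw [hW]; ring

/-- Per-stage decrease of the logistic loss: with weights
`w_t = 1/(1 + e^{s_t})`, total weight `W`, and weighted edge
`γ = (Σ w_t z_t)/(2W)` of a weak learner with `±1` predictions `z_t`, some
coefficient `α ∈ [-2,2]` decreases the total logistic loss by at least
`2γ² W`. -/
theorem stmt_12 (T : ℕ) (hT : 1 ≤ T) (s z : Fin T → ℝ)
    (hz : ∀ t, z t = 1 ∨ z t = -1)
    (w : Fin T → ℝ) (hw : ∀ t, w t = 1 / (1 + Real.exp (s t)))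
    (W : ℝ) (hW : W = ∑ t, w t)
    (γ : ℝ) (hγ : γ = (∑ t, w t * z t) / (2 * W)) :
    ∃ α : ℝ, -2 ≤ α ∧ α ≤ 2 ∧
      ∑ t, (Real.log (1 + Real.exp (-(s t + α * z t)))
              - Real.log (1 + Real.exp (-(s t))))
        ≤ -2 * γ ^ 2 * W := by
  have : Nonempty (Fin T) := Fin.pos_iff_nonempty.1 hT
  have abs_z_le (t : Fin T) : |z t| ≤ 1 := ((abs_eq zero_le_one).2 (hz t)).le
  obtain ⟨abs_le_one, loss_le⟩ := stmt_12_general s z abs_z_le w hw W hW γ hγ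
  obtain ⟨neg_one_le, le_one⟩ := abs_le.1 abs_le_one
  exact ⟨2 * γ, by linarith, by linarith, loss_le⟩
end

section
/- Let N, T ≥ 1 and R ≥ 0. For 1 ≤ i ≤ N and 1 ≤ t ≤ T let z_t^i ∈ {-1,1} and α_t^i ∈ ℝ. Define s_t^0 = 0, s_t^i = s_t^{i-1} + α_t^i z_t^i, w_t^i = 1/(1 + e^{s_t^{i-1}}), γ_i = (Σ_{t=1}^T w_t^i z_t^i)/(2·Σ_{t=1}^T w_t^i), and M_i = #{t ∈ {1,…,T} : s_t^i ≤ 0} for 1 ≤ i ≤ N. Suppose that for every 1 ≤ i ≤ N and every β ∈ [-2,2], Σ_{t=1}^T ln(1 + e^{-s_t^i}) ≤ Σ_{t=1}^T ln(1 + e^{-(s_t^{i-1} + β z_t^i)}) + R. Then (Σ_{i=1}^N γ_i²)·(min_{1≤i≤N} M_i) ≤ T·ln 2 + N·R. -/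
/-!
The total logistic loss of the experts serves as a potential. Moving the scores `s` along `β z`
multiplies the exponential inside each logistic loss by `exp (-(β z))`, which by concavity of `log`
changes the loss by at most `w (exp (-(β z)) - 1)`, where `w = sigmoid (-s)`. Convexity of `exp`
on `[-1, 1]` bounds the sum of these changes by `W (cosh β - 1 - 2 γ sinh β)`, with `W` the total
weight and `γ` the edge, and at `β = 2 γ` this is at most `-2 γ² W`. A mistake carries weight at
least `1/2`, so if the current expert makes `M` mistakes, then up to the regret the next one
has its potential lower by `γ² M`. The potential starts at `T log 2` and stays nonnegative.
-/

section

open Finset Real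

/-- The logistic loss of a prediction with margin `x`, the per-example potential of the boosting
argument. -/
noncomputable def logisticLoss (x : ℝ) : ℝ := log (1 + exp (-x))

/-- The edge of a predictor under weights `w` on the examples in `S`, where `z t` is its margin on
`t`; for `z t = ± 1` it is the weighted accuracy minus `1/2`. It is `0` when the total weight
vanishes. -/
noncomputable def weightedEdge {ι : Type*} (S : Finset ι) (w z : ι → ℝ) : ℝ :=
  (∑ t ∈ S, w t * z t) / (2 * ∑ t ∈ S, w t)

theorem logisticLoss_zero : logisticLoss 0 = log 2 := by
  norm_num [logisticLoss]

theorem logisticLoss_nonneg (x : ℝ) : 0 ≤ logisticLoss x :=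
  log_nonneg (le_add_of_nonneg_right (exp_nonneg _))

theorem logisticLoss_add_le (x b : ℝ) :
    logisticLoss (x + b) ≤ logisticLoss x + sigmoid (-x) * (exp (-b) - 1) := by
  have hx : 0 < 1 + exp (-x) := by positivity
  have hxb : 0 < 1 + exp (-(x + b)) := by positivity
  have hlog : logisticLoss (x + b) - logisticLoss x ≤
      (1 + exp (-(x + b))) / (1 + exp (-x)) - 1 := by
    rw [logisticLoss, logisticLoss, ← log_div hxb.ne' hx.ne']
    exact log_le_sub_one_of_pos (div_pos hxb hx)
  have hratio : (1 + exp (-(x + b))) / (1 + exp (-x)) - 1 =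
      sigmoid (-x) * (exp (-b) - 1) := by
    rw [sigmoid_def, neg_neg, neg_add, exp_add, exp_neg x]
    field_simp
    ring
  linarith

theorem cosh_sub_mul_sinh_le (x : ℝ) : cosh x - x * sinh x ≤ 1 - x ^ 2 / 2 := by
  have hprod : 0 ≤ (exp x - (x + 1)) * (exp (-x) - (-x + 1)) :=
    mul_nonneg (sub_nonneg.2 (add_one_le_exp x)) (sub_nonneg.2 (add_one_le_exp (-x)))
  have hinv : exp x * exp (-x) = 1 := by rw [← exp_add, add_neg_cancel, exp_zero]
  rw [cosh_eq, sinh_eq]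
  linarith

variable {ι : Type*} {S : Finset ι}

section

variable {s w z : ι → ℝ}

theorem two_mul_weightedEdge_mul_sum (hW : ∑ t ∈ S, w t ≠ 0) :
    2 * weightedEdge S w z * ∑ t ∈ S, w t = ∑ t ∈ S, w t * z t := by
  rw [weightedEdge]
  field_simp

theorem abs_two_mul_weightedEdge_le_one (hw : ∀ t ∈ S, 0 ≤ w t) (hz : ∀ t ∈ S, |z t| ≤ 1) :
    |2 * weightedEdge S w z| ≤ 1 := by
  have hsum : |∑ t ∈ S, w t * z t| ≤ ∑ t ∈ S, w t := by
    refine (abs_sum_le_sum_abs _ _).trans (sum_le_sum fun t ht => ?_)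
    rw [abs_mul, abs_of_nonneg (hw t ht)]
    exact mul_le_of_le_one_right (hw t ht) (hz t ht)
  have hW : 0 ≤ ∑ t ∈ S, w t := sum_nonneg hw
  rw [weightedEdge, ← mul_div_assoc, mul_div_mul_left _ _ two_ne_zero, abs_div, abs_of_nonneg hW]
  exact div_le_one_of_le₀ hsum hW

theorem sum_mul_exp_neg_le (hw : ∀ t ∈ S, 0 ≤ w t) (hz : ∀ t ∈ S, |z t| ≤ 1) (β : ℝ) :
    ∑ t ∈ S, w t * exp (-(β * z t)) ≤
      cosh β * ∑ t ∈ S, w t - sinh β * ∑ t ∈ S, w t * z t := by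
  rw [mul_sum, mul_sum, ← sum_sub_distrib]
  refine sum_le_sum fun t ht => ?_
  have hconv : exp (-(β * z t)) ≤ cosh β - z t * sinh β := by
    simpa [mul_comm, sub_eq_add_neg] using exp_mul_le_cosh_add_mul_sinh (hz t ht) (-β)
  calc w t * exp (-(β * z t)) ≤ w t * (cosh β - z t * sinh β) :=
        mul_le_mul_of_nonneg_left hconv (hw t ht)
    _ = cosh β * w t - sinh β * (w t * z t) := by ring

theorem sum_mul_exp_neg_two_mul_weightedEdge_le (hw : ∀ t ∈ S, 0 ≤ w t)
    (hW : ∑ t ∈ S, w t ≠ 0) (hz : ∀ t ∈ S, |z t| ≤ 1) :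
    ∑ t ∈ S, w t * exp (-(2 * weightedEdge S w z * z t)) ≤
      (1 - 2 * weightedEdge S w z ^ 2) * ∑ t ∈ S, w t := by
  set γ := weightedEdge S w z
  calc ∑ t ∈ S, w t * exp (-(2 * γ * z t))
      ≤ cosh (2 * γ) * ∑ t ∈ S, w t - sinh (2 * γ) * ∑ t ∈ S, w t * z t :=
        sum_mul_exp_neg_le hw hz (2 * γ)
    _ = (cosh (2 * γ) - 2 * γ * sinh (2 * γ)) * ∑ t ∈ S, w t := by
        rw [← two_mul_weightedEdge_mul_sum hW]
        ring
    _ ≤ (1 - (2 * γ) ^ 2 / 2) * ∑ t ∈ S, w t :=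
        mul_le_mul_of_nonneg_right (cosh_sub_mul_sinh_le _) (sum_nonneg hw)
    _ = (1 - 2 * γ ^ 2) * ∑ t ∈ S, w t := by ring

theorem card_nonpos_le_two_mul_sum_sigmoid_neg (S : Finset ι) (s : ι → ℝ) :
    (#{t ∈ S | s t ≤ 0} : ℝ) ≤ 2 * ∑ t ∈ S, sigmoid (-s t) := by
  have hhalf : (#{t ∈ S | s t ≤ 0} : ℝ) * 2⁻¹ ≤ ∑ t ∈ S with s t ≤ 0, sigmoid (-s t) := by
    rw [← nsmul_eq_mul]
    refine card_nsmul_le_sum _ _ _ fun t ht => ?_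
    rw [← sigmoid_zero]
    exact sigmoid_le (neg_nonneg.2 (mem_filter.1 ht).2)
  have hsubset : ∑ t ∈ S with s t ≤ 0, sigmoid (-s t) ≤ ∑ t ∈ S, sigmoid (-s t) :=
    sum_le_sum_of_subset_of_nonneg (filter_subset _ _) fun _ _ _ => sigmoid_nonneg _
  linarith

theorem sum_logisticLoss_add_two_mul_weightedEdge_le (hS : S.Nonempty)
    (hw : ∀ t ∈ S, w t = sigmoid (-s t)) (hz : ∀ t ∈ S, |z t| ≤ 1) :
    ∑ t ∈ S, logisticLoss (s t + 2 * weightedEdge S w z * z t) ≤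
      ∑ t ∈ S, logisticLoss (s t) - weightedEdge S w z ^ 2 * #{t ∈ S | s t ≤ 0} := by
  have hw_pos : ∀ t ∈ S, 0 < w t := fun t ht => hw t ht ▸ sigmoid_pos _
  set γ := weightedEdge S w z
  have hexp : ∑ t ∈ S, w t * exp (-(2 * γ * z t)) ≤ (1 - 2 * γ ^ 2) * ∑ t ∈ S, w t :=
    sum_mul_exp_neg_two_mul_weightedEdge_le (fun t ht => (hw_pos t ht).le)
      (sum_pos hw_pos hS).ne' hz
  have hcard : (#{t ∈ S | s t ≤ 0} : ℝ) ≤ 2 * ∑ t ∈ S, w t :=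
    (card_nonpos_le_two_mul_sum_sigmoid_neg S s).trans_eq (by rw [sum_congr rfl hw])
  calc ∑ t ∈ S, logisticLoss (s t + 2 * γ * z t)
      ≤ ∑ t ∈ S, (logisticLoss (s t) + w t * (exp (-(2 * γ * z t)) - 1)) :=
        sum_le_sum fun t ht => hw t ht ▸ logisticLoss_add_le _ _
    _ = ∑ t ∈ S, logisticLoss (s t) +
          (∑ t ∈ S, w t * exp (-(2 * γ * z t)) - ∑ t ∈ S, w t) := by
        simp only [mul_sub, mul_one, sum_add_distrib, sum_sub_distrib]
    _ ≤ ∑ t ∈ S, logisticLoss (s t) - γ ^ 2 * (2 * ∑ t ∈ S, w t) := by linarith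
    _ ≤ ∑ t ∈ S, logisticLoss (s t) - γ ^ 2 * #{t ∈ S | s t ≤ 0} := by gcongr

end

theorem sum_sq_weightedEdge_mul_card_nonpos_le (N : ℕ) (hS : S.Nonempty) (R : ℕ → ℝ)
    (z : ℕ → ι → ℝ) (hz : ∀ j < N, ∀ t ∈ S, |z j t| ≤ 1)
    (s : ι → ℕ → ℝ)
    (w : ℕ → ι → ℝ) (hw : ∀ j < N, ∀ t ∈ S, w j t = sigmoid (-s t j))
    (hregret : ∀ j < N, ∀ β : ℝ, |β| ≤ 1 →
      ∑ t ∈ S, logisticLoss (s t (j + 1)) ≤ ∑ t ∈ S, logisticLoss (s t j + β * z j t) + R j) :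
    ∑ j ∈ range N, weightedEdge S (w j) (z j) ^ 2 * #{t ∈ S | s t j ≤ 0} ≤
      ∑ t ∈ S, logisticLoss (s t 0) + ∑ j ∈ range N, R j := by
  let loss (j : ℕ) : ℝ := ∑ t ∈ S, logisticLoss (s t j)
  have hdrop : ∀ j ∈ range N, weightedEdge S (w j) (z j) ^ 2 * #{t ∈ S | s t j ≤ 0} ≤
      R j - (loss (j + 1) - loss j) := by
    intro j hj
    rw [mem_range] at hj
    have hstep := sum_logisticLoss_add_two_mul_weightedEdge_le hS (hw j hj) (hz j hj)
    have hcompare := hregret j hj _ (abs_two_mul_weightedEdge_le_one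
      (fun t ht => hw j hj t ht ▸ sigmoid_nonneg _) (hz j hj))
    linarith
  have htotal := sum_le_sum hdrop
  rw [sum_sub_distrib, sum_range_sub] at htotal
  have hfinal : 0 ≤ loss N := sum_nonneg fun _ _ => logisticLoss_nonneg _
  linarith

theorem stmt_13_general (N : ℕ) (hN : 1 ≤ N) (hS : S.Nonempty) (R : ℕ → ℝ)
    (z : ℕ → ι → ℝ) (hz : ∀ j < N, ∀ t ∈ S, |z j t| ≤ 1)
    (s : ι → ℕ → ℝ) (hs0 : ∀ t ∈ S, s t 0 = 0)
    (w : ℕ → ι → ℝ) (hw : ∀ j < N, ∀ t ∈ S, w j t = sigmoid (-s t j))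
    (γ : ℕ → ℝ) (hγ : ∀ j < N, γ j = weightedEdge S (w j) (z j))
    (M : ℕ → ℕ) (hM : ∀ i, 1 ≤ i → i ≤ N → M i = #{t ∈ S | s t i ≤ 0})
    (hregret : ∀ j < N, ∀ β : ℝ, |β| ≤ 1 →
      ∑ t ∈ S, logisticLoss (s t (j + 1)) ≤ ∑ t ∈ S, logisticLoss (s t j + β * z j t) + R j) :
    (∑ j ∈ range N, γ j ^ 2) * (Icc 1 N).inf' (nonempty_Icc.2 hN) (fun i => (M i : ℝ)) ≤
      #S * log 2 + ∑ j ∈ range N, R j := by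
  set m := (Icc 1 N).inf' (nonempty_Icc.2 hN) (fun i => (M i : ℝ))
  have hm_le_M : ∀ i, 1 ≤ i → i ≤ N → m ≤ #{t ∈ S | s t i ≤ 0} := fun i hi hiN =>
    hM i hi hiN ▸ inf'_le (fun i => (M i : ℝ)) (mem_Icc.2 ⟨hi, hiN⟩)
  have hm_le : ∀ j < N, m ≤ #{t ∈ S | s t j ≤ 0} := by
    rintro (_ | j) hj
    · -- The zero scores count as mistakes on every example.
      rw [filter_true_of_mem fun t ht => (hs0 t ht).le]
      exact (hm_le_M 1 le_rfl hN).trans (mod_cast card_filter_le _ _)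
    · exact hm_le_M (j + 1) j.succ_pos hj.le
  have hinit : ∑ t ∈ S, logisticLoss (s t 0) = #S * log 2 := by
    rw [sum_congr rfl fun t ht => by rw [hs0 t ht, logisticLoss_zero], sum_const, nsmul_eq_mul]
  calc (∑ j ∈ range N, γ j ^ 2) * m
      = ∑ j ∈ range N, γ j ^ 2 * m := sum_mul _ _ _
    _ ≤ ∑ j ∈ range N, weightedEdge S (w j) (z j) ^ 2 * #{t ∈ S | s t j ≤ 0} :=
        sum_le_sum fun j hj => by
          rw [hγ j (mem_range.1 hj)]
          exact mul_le_mul_of_nonneg_left (hm_le j (mem_range.1 hj)) (sq_nonneg _)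
    _ ≤ #S * log 2 + ∑ j ∈ range N, R j :=
        hinit ▸ sum_sq_weightedEdge_mul_card_nonpos_le N hS R z hz s w hw hregret

end

/-- Deterministic core of the mistake bound for AdaBoost.OL. Weak learners are
indexed by `j = 0, …, N-1` (the paper's `i = j+1`), examples by
`t = 0, …, T-1`; `s t j` is expert `j`'s score on example `t` (with
`s t 0 = 0` and `s t (j+1) = s t j + α_j,t z_j,t`), `w j t = 1/(1+e^{s t j})`
are the logistic-loss weights, `γ j` is the weighted edge of weak learner
`j+1`, and `M i` counts the mistakes of expert `i` for `1 ≤ i ≤ N`. If each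
per-learner online optimization has regret at most `R` against every fixed
coefficient `β ∈ [-2,2]`, then `(Σ_j γ_j²) · min_{1≤i≤N} M_i ≤ T ln 2 + N R`. -/
theorem stmt_13 (N T : ℕ) (hN : 1 ≤ N) (hT : 1 ≤ T) (R : ℝ) (hR : 0 ≤ R)
    (z : ℕ → ℕ → ℝ) (hz : ∀ j < N, ∀ t < T, z j t = 1 ∨ z j t = -1)
    (a : ℕ → ℕ → ℝ)
    (s : ℕ → ℕ → ℝ) (hs0 : ∀ t < T, s t 0 = 0)
    (hsrec : ∀ j < N, ∀ t < T, s t (j + 1) = s t j + a j t * z j t)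
    (w : ℕ → ℕ → ℝ) (hw : ∀ j < N, ∀ t < T, w j t = 1 / (1 + Real.exp (s t j)))
    (γ : ℕ → ℝ)
    (hγ : ∀ j < N, γ j = (∑ t ∈ Finset.range T, w j t * z j t)
                            / (2 * ∑ t ∈ Finset.range T, w j t))
    (M : ℕ → ℕ)
    (hM : ∀ i, 1 ≤ i → i ≤ N →
      M i = ((Finset.range T).filter (fun t => s t i ≤ 0)).card)
    (hregret : ∀ j < N, ∀ β : ℝ, -2 ≤ β → β ≤ 2 →
      ∑ t ∈ Finset.range T, Real.log (1 + Real.exp (-(s t (j + 1))))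
        ≤ ∑ t ∈ Finset.range T, Real.log (1 + Real.exp (-(s t j + β * z j t))) + R) :
    (∑ j ∈ Finset.range N, γ j ^ 2)
        * ((Finset.Icc 1 N).inf' (Finset.nonempty_Icc.mpr hN) (fun i => (M i : ℝ)))
      ≤ T * Real.log 2 + N * R := by
  simpa using stmt_13_general N hN (Finset.nonempty_range_iff.2 (by lia)) (fun _ => R) z
    (fun j hj t ht => by rcases hz j hj t (Finset.mem_range.1 ht) with h | h <;> simp [h])
    s (by simpa using hs0) w (by simpa [Real.sigmoid_def] using hw) γ hγ M hM
    fun j hj β hβ => hregret j hj β (by linarith [abs_le.1 hβ]) (by linarith [abs_le.1 hβ])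
end

section
/- Let N, T ≥ 1 and let ℓ_t^i ∈ [0,1] for 1 ≤ i ≤ N and 1 ≤ t ≤ T. Define weights v_1^i = 1 and v_{t+1}^i = v_t^i·exp(-ℓ_t^i). Then Σ_{t=1}^T (Σ_{i=1}^N v_t^i ℓ_t^i)/(Σ_{i=1}^N v_t^i) ≤ (min_{1≤i≤N} Σ_{t=1}^T ℓ_t^i + ln N)/(1 - e^{-1}). -/
/-!
The potential is the total weight `W t = ∑ i, v t i`. On `[0, 1]` the convex function
`x ↦ exp (-η x)` lies below its chord `1 - (1 - exp (-η)) x`, so a round with expected loss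
`m t = s.centerMass (v t) (ℓ t)` multiplies `W` by at most
`1 - (1 - exp (-η)) * m t ≤ exp (-(1 - exp (-η)) * m t)`. On the other hand `W T` is at least the
weight of any single expert `k`, which is `v 0 k * exp (-η * ∑ t < T, ℓ t k)`. Taking logarithms
compares the two cumulative losses.
-/

open Finset Real

theorem exp_neg_mul_le_one_sub (η : ℝ) {x : ℝ} (hx : x ∈ Set.Icc 0 1) :
    exp (-(η * x)) ≤ 1 - (1 - exp (-η)) * x := by
  have chord := convexOn_exp.2 (Set.mem_univ 0) (Set.mem_univ (-η))
    (sub_nonneg.mpr hx.2) hx.1 (sub_add_cancel 1 x)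
  simp only [smul_eq_mul, mul_zero, zero_add, exp_zero, mul_one] at chord
  calc exp (-(η * x)) = exp (x * -η) := by ring_nf
    _ ≤ 1 - x + x * exp (-η) := chord
    _ = 1 - (1 - exp (-η)) * x := by ring

theorem eq_mul_exp_sum_range {u a : ℕ → ℝ} {T : ℕ}
    (hu : ∀ t < T, u (t + 1) = u t * exp (a t)) :
    u T = u 0 * exp (∑ t ∈ range T, a t) := by
  induction T with
  | zero => simp
  | succ T ih =>
    rw [hu T T.lt_succ_self, ih fun t ht ↦ hu t (ht.trans T.lt_succ_self), sum_range_succ,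
      exp_add, mul_assoc]

section ExponentialWeights

variable {ι : Type*} {s : Finset ι}

theorem sum_mul_centerMass {w : ι → ℝ} (hw : ∀ i ∈ s, 0 ≤ w i) (x : ι → ℝ) :
    (∑ i ∈ s, w i) * s.centerMass w x = ∑ i ∈ s, w i * x i := by
  rcases eq_or_ne (∑ i ∈ s, w i) 0 with hW | hW
  · have hw_zero := (sum_eq_zero_iff_of_nonneg hw).mp hW
    rw [hW, zero_mul, sum_eq_zero fun i hi ↦ by rw [hw_zero i hi, zero_mul]]
  · simp only [centerMass, smul_eq_mul, mul_inv_cancel_left₀ hW]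

theorem sum_mul_exp_neg_mul_le (η : ℝ) {w x : ι → ℝ} (hw : ∀ i ∈ s, 0 ≤ w i)
    (hx : ∀ i ∈ s, x i ∈ Set.Icc 0 1) :
    ∑ i ∈ s, w i * exp (-(η * x i)) ≤
      (∑ i ∈ s, w i) * exp (-((1 - exp (-η)) * s.centerMass w x)) := by
  calc ∑ i ∈ s, w i * exp (-(η * x i))
      ≤ ∑ i ∈ s, w i * (1 - (1 - exp (-η)) * x i) :=
        sum_le_sum fun i hi ↦
          mul_le_mul_of_nonneg_left (exp_neg_mul_le_one_sub η (hx i hi)) (hw i hi)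
    _ = ∑ i ∈ s, w i - (1 - exp (-η)) * ∑ i ∈ s, w i * x i := by
        rw [mul_sum, ← sum_sub_distrib]
        exact sum_congr rfl fun i _ ↦ by ring
    _ = (∑ i ∈ s, w i) * (1 - (1 - exp (-η)) * s.centerMass w x) := by
        rw [← sum_mul_centerMass hw]
        ring
    _ ≤ (∑ i ∈ s, w i) * exp (-((1 - exp (-η)) * s.centerMass w x)) :=
        mul_le_mul_of_nonneg_left (one_sub_le_exp_neg _) (sum_nonneg hw)

variable {η : ℝ} {T : ℕ} {ℓ v : ℕ → ι → ℝ}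

theorem expWeights_eq {i : ι} (hv : ∀ t < T, v (t + 1) i = v t i * exp (-(η * ℓ t i))) :
    v T i = v 0 i * exp (-(η * ∑ t ∈ range T, ℓ t i)) := by
  rw [eq_mul_exp_sum_range (u := (v · i)) hv, sum_neg_distrib, mul_sum]

theorem expWeights_nonneg {i : ι} (hv₀ : 0 ≤ v 0 i)
    (hv : ∀ t < T, v (t + 1) i = v t i * exp (-(η * ℓ t i))) : 0 ≤ v T i := by
  rw [expWeights_eq hv]
  positivity

theorem sum_expWeights_le (hℓ : ∀ t < T, ∀ i ∈ s, ℓ t i ∈ Set.Icc 0 1)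
    (hv₀ : ∀ i ∈ s, 0 ≤ v 0 i)
    (hv : ∀ t < T, ∀ i ∈ s, v (t + 1) i = v t i * exp (-(η * ℓ t i))) :
    ∑ i ∈ s, v T i ≤ (∑ i ∈ s, v 0 i) *
      exp (-((1 - exp (-η)) * ∑ t ∈ range T, s.centerMass (v t) (ℓ t))) := by
  induction T with
  | zero => simp
  | succ T ih =>
    have hlt : ∀ t < T, t < T + 1 := fun t ht ↦ ht.trans T.lt_succ_self
    have hvT : ∀ i ∈ s, 0 ≤ v T i := fun i hi ↦
      expWeights_nonneg (hv₀ i hi) fun t ht ↦ hv t (hlt t ht) i hi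
    calc ∑ i ∈ s, v (T + 1) i
        = ∑ i ∈ s, v T i * exp (-(η * ℓ T i)) := sum_congr rfl (hv T T.lt_succ_self)
      _ ≤ (∑ i ∈ s, v T i) * exp (-((1 - exp (-η)) * s.centerMass (v T) (ℓ T))) :=
          sum_mul_exp_neg_mul_le η hvT (hℓ T T.lt_succ_self)
      _ ≤ (∑ i ∈ s, v 0 i) *
            exp (-((1 - exp (-η)) * ∑ t ∈ range T, s.centerMass (v t) (ℓ t))) *
            exp (-((1 - exp (-η)) * s.centerMass (v T) (ℓ T))) :=
          mul_le_mul_of_nonneg_right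
            (ih (fun t ht ↦ hℓ t (hlt t ht)) fun t ht ↦ hv t (hlt t ht)) (exp_pos _).le
      _ = _ := by rw [mul_assoc, ← exp_add, ← neg_add, ← mul_add, ← sum_range_succ]

theorem mul_sum_centerMass_expWeights_le (hℓ : ∀ t < T, ∀ i ∈ s, ℓ t i ∈ Set.Icc 0 1)
    (hv₀ : ∀ i ∈ s, 0 ≤ v 0 i)
    (hv : ∀ t < T, ∀ i ∈ s, v (t + 1) i = v t i * exp (-(η * ℓ t i)))
    {k : ι} (hk : k ∈ s) (hvk : 0 < v 0 k) :
    (1 - exp (-η)) * ∑ t ∈ range T, s.centerMass (v t) (ℓ t) ≤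
      η * ∑ t ∈ range T, ℓ t k + log ((∑ i ∈ s, v 0 i) / v 0 k) := by
  set A := (1 - exp (-η)) * ∑ t ∈ range T, s.centerMass (v t) (ℓ t)
  set B := η * ∑ t ∈ range T, ℓ t k
  have hW : 0 < ∑ i ∈ s, v 0 i := hvk.trans_le (single_le_sum hv₀ hk)
  have weight_le : v 0 k * exp (-B) ≤ (∑ i ∈ s, v 0 i) * exp (-A) :=
    calc v 0 k * exp (-B) = v T k := (expWeights_eq fun t ht ↦ hv t ht k hk).symm
      _ ≤ ∑ i ∈ s, v T i := single_le_sum (fun i hi ↦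
          expWeights_nonneg (hv₀ i hi) fun t ht ↦ hv t ht i hi) hk
      _ ≤ (∑ i ∈ s, v 0 i) * exp (-A) := sum_expWeights_le hℓ hv₀ hv
  have log_le := log_le_log (by positivity) weight_le
  rw [log_mul hvk.ne' (exp_ne_zero _), log_mul hW.ne' (exp_ne_zero _), log_exp, log_exp] at log_le
  rw [log_div hW.ne' hvk.ne']
  linarith

end ExponentialWeights

theorem stmt_14_general {ι : Type*} {s : Finset ι} {η : ℝ} (hη : 0 < η) {T : ℕ}
    {ℓ v : ℕ → ι → ℝ} (hℓ : ∀ t < T, ∀ i ∈ s, ℓ t i ∈ Set.Icc 0 1)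
    (hv₀ : ∀ i ∈ s, 0 ≤ v 0 i)
    (hv : ∀ t < T, ∀ i ∈ s, v (t + 1) i = v t i * exp (-(η * ℓ t i)))
    {k : ι} (hk : k ∈ s) (hvk : 0 < v 0 k) :
    ∑ t ∈ range T, s.centerMass (v t) (ℓ t) ≤
      (η * ∑ t ∈ range T, ℓ t k + log ((∑ i ∈ s, v 0 i) / v 0 k)) / (1 - exp (-η)) := by
  have hη' : 0 < 1 - exp (-η) := sub_pos.mpr (exp_lt_one_iff.mpr (neg_neg_of_pos hη))
  rw [le_div_iff₀' hη']
  exact mul_sum_centerMass_expWeights_le hℓ hv₀ hv hk hvk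

/-- Regret bound for the Hedge (exponential weights) algorithm with learning
rate `η = 1`: with losses `ℓ t i ∈ [0,1]` (time `t = 0, …, T-1`, experts
`i = 0, …, N-1`) and weights `v 0 i = 1`, `v (t+1) i = v t i · e^{-ℓ t i}`,
the total expected loss satisfies
`Σ_t (Σ_i v_t^i ℓ_t^i)/(Σ_i v_t^i) ≤ (min_i Σ_t ℓ_t^i + ln N)/(1 - e⁻¹)`. -/
theorem stmt_14 (N T : ℕ) (hN : 1 ≤ N) (hT : 1 ≤ T)
    (ℓ : ℕ → ℕ → ℝ) (hℓ : ∀ t < T, ∀ i < N, 0 ≤ ℓ t i ∧ ℓ t i ≤ 1)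
    (v : ℕ → ℕ → ℝ) (hv1 : ∀ i < N, v 0 i = 1)
    (hvrec : ∀ t < T, ∀ i < N, v (t + 1) i = v t i * Real.exp (-(ℓ t i))) :
    ∑ t ∈ Finset.range T,
        (∑ i ∈ Finset.range N, v t i * ℓ t i) / (∑ i ∈ Finset.range N, v t i)
      ≤ ((Finset.range N).inf' (Finset.nonempty_range_iff.mpr (by omega))
            (fun i => ∑ t ∈ Finset.range T, ℓ t i) + Real.log N)
          / (1 - Real.exp (-1)) := by
  replace hv1 : ∀ i ∈ range N, v 0 i = 1 := fun i hi ↦ hv1 i (mem_range.mp hi)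
  obtain ⟨k, hk, hmin⟩ := exists_mem_eq_inf' (nonempty_range_iff.mpr (by omega : N ≠ 0))
    fun i ↦ ∑ t ∈ range T, ℓ t i
  have hW : ∑ i ∈ range N, v 0 i = N := by simp [sum_congr rfl hv1]
  have bound := stmt_14_general (η := 1) (v := v) one_pos
    (fun t ht i hi ↦ hℓ t ht i (mem_range.mp hi)) (fun i hi ↦ by simp [hv1 i hi])
    (by simpa only [one_mul, mem_range] using hvrec) hk (by simp [hv1 k hk])
  simpa only [hmin, hW, hv1 k hk, div_one, one_mul, centerMass, smul_eq_mul, inv_mul_eq_div]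
    using bound
end
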